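/- Consider any run of the multi-level Jefferson's method (with arbitrary tie-breaking) on a multi-level apportionment instance. Whenever a node c with parent p has just received a seat — that is, for any g ≥ 1 such that c is among the recipients of the g-th seat — the resulting allocation V^g after g seats satisfies V^g_c / R_c ≥ V^g_p / R_p. -/

import Mathlib

/-- A multi-level apportionment instance: a rooted tree on nodes `0, …, n`
(root `0`, encoded by a parent function with `parent i < i` for `i ≠ 0`),
together with entitlements `W`. -/
structure MLA where
  n : ℕ
  parent : Fin (n + 1) → Fin (n + 1)
  parent_lt : ∀ i : Fin (n + 1), i ≠ 0 → (parent i : ℕ) < (i : ℕ)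
  W : Fin (n + 1) → ℝ
  W_pos : ∀ i, 0 < W i
  W_le_one : ∀ i, W i ≤ 1
  W_root : W 0 = 1
  W_sum : ∀ i : Fin (n + 1),
    (Finset.univ.filter (fun c => c ≠ 0 ∧ parent c = i)).Nonempty →
    ∑ c ∈ Finset.univ.filter (fun c => c ≠ 0 ∧ parent c = i), W c = 1

namespace MLA

variable (T : MLA)

/-- The set of children of node `i`. -/
def children (i : Fin (T.n + 1)) : Finset (Fin (T.n + 1)) :=
  Finset.univ.filter (fun c => c ≠ 0 ∧ T.parent c = i)

/-- The ancestor set `A(i)`: `A(0) = {0}` and `A(i) = {parent i} ∪ A(parent i)`. -/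
def ancestors (i : Fin (T.n + 1)) : Finset (Fin (T.n + 1)) :=
  if h : i = 0 then {0} else insert (T.parent i) (ancestors (T.parent i))
termination_by (i : ℕ)
decreasing_by exact T.parent_lt i h

/-- The entitlement of node `i` relative to the root: `R i = ∏_{a ∈ A(i) ∪ {i}} W a`. -/
def R (i : Fin (T.n + 1)) : ℝ := ∏ a ∈ insert i (T.ancestors i), T.W a

/-- `V` is an allocation of `h` seats. -/
def IsAlloc (h : ℕ) (V : Fin (T.n + 1) → ℕ) : Prop :=
  V 0 = h ∧ ∀ i, (T.children i).Nonempty → V i = ∑ c ∈ T.children i, V c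

/-- `V` fulfills lower quota: `V i ≥ LQ i = max_{a ∈ A(i)} ⌊(R i / R a) · V a⌋`. -/
def FulfillsLowerQuota (V : Fin (T.n + 1) → ℕ) : Prop :=
  ∀ i, ∀ a ∈ T.ancestors i, ⌊T.R i / T.R a * (V a : ℝ)⌋ ≤ (V i : ℤ)

/-- `V` fulfills upper quota: `V i ≤ UQ i = min_{a ∈ A(i)} ⌈(R i / R a) · V a⌉`. -/
def FulfillsUpperQuota (V : Fin (T.n + 1) → ℕ) : Prop :=
  ∀ i, ∀ a ∈ T.ancestors i, (V i : ℤ) ≤ ⌈T.R i / T.R a * (V a : ℝ)⌉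


/-- `P` is the set of nodes receiving the new seat in one step of an iterative
method with selection criterion `crit` (to be minimized among children) and
eligibility constraint `elig`: `P` is a root-to-leaf path, each non-root node on
the path is an eligible child of its parent minimizing `crit` among all eligible
children, and the seat counts along `P` each increase by one. -/
def IsStepWith (crit : (Fin (T.n + 1) → ℕ) → Fin (T.n + 1) → ℝ)
    (elig : (Fin (T.n + 1) → ℕ) → Fin (T.n + 1) → Prop)
    (P : Finset (Fin (T.n + 1))) (Vh Vh1 : Fin (T.n + 1) → ℕ) : Prop :=
  (0 : Fin (T.n + 1)) ∈ P ∧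
  (∀ i ∈ P, i ≠ 0 → T.parent i ∈ P) ∧
  (∀ i ∈ P, (T.children i).Nonempty → ∃ c ∈ T.children i, c ∈ P) ∧
  (∀ c ∈ P, ∀ d ∈ P, c ≠ 0 → d ≠ 0 → T.parent c = T.parent d → c = d) ∧
  (∀ c ∈ P, c ≠ 0 → elig Vh c ∧
    ∀ d ∈ T.children (T.parent c), elig Vh d → crit Vh c ≤ crit Vh d) ∧
  (∀ i, Vh1 i = Vh i + if i ∈ P then 1 else 0)

/-- `V : ℕ → (nodes → ℕ)` is a run of the iterative method given by `crit` and
`elig` (with arbitrary tie-breaking): `V 0` is the all-zero allocation and each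
`V (h+1)` is obtained from `V h` by allocating one more seat along a path. -/
def IsRun (crit : (Fin (T.n + 1) → ℕ) → Fin (T.n + 1) → ℝ)
    (elig : (Fin (T.n + 1) → ℕ) → Fin (T.n + 1) → Prop)
    (V : ℕ → Fin (T.n + 1) → ℕ) : Prop :=
  (∀ i, V 0 i = 0) ∧ ∀ h, ∃ P, T.IsStepWith crit elig P (V h) (V (h + 1))

/-- Adams' criterion: a child `c` minimizing `V c / R c` receives the seat. -/
noncomputable def adamsCrit (V : Fin (T.n + 1) → ℕ) (c : Fin (T.n + 1)) : ℝ :=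
  (V c : ℝ) / T.R c

/-- Jefferson's criterion: a child `c` minimizing `(V c + 1) / R c` receives the seat. -/
noncomputable def jeffersonCrit (V : Fin (T.n + 1) → ℕ) (c : Fin (T.n + 1)) : ℝ :=
  ((V c : ℝ) + 1) / T.R c

/-- Trivial eligibility constraint: every child is eligible. -/
def trivElig (_ : Fin (T.n + 1) → ℕ) (_ : Fin (T.n + 1)) : Prop := True

/-- Eligibility constraint of the quota method: `V c / W c < V (parent c) + 1`. -/
def quotaElig (V : Fin (T.n + 1) → ℕ) (c : Fin (T.n + 1)) : Prop :=
  (V c : ℝ) / T.W c < (V (T.parent c) : ℝ) + 1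

/-- Eligibility constraint of the upper-compliant quota method:
`V c / R c < (V a + 1) / R a` for every ancestor `a` of `c`. -/
def ucElig (V : Fin (T.n + 1) → ℕ) (c : Fin (T.n + 1)) : Prop :=
  ∀ a ∈ T.ancestors c, (V c : ℝ) / T.R c < ((V a : ℝ) + 1) / T.R a

end MLA

/-!
Under Jefferson's rule any two siblings `c` and `d` satisfy, at every stage, the min-max inequality
`V d / R d ≤ (V c + 1) / R c`. If `c` receives the next seat, then its old criterion value
`(V c + 1) / R c` is its new ratio, so that ratio dominates the new ratios of all its siblings.
The ratio of the parent is the mediant of the ratios of its children, hence no larger than the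
greatest of them.
-/

namespace MLA

variable {T : MLA}

section Tree

variable {a c i p : Fin (T.n + 1)}

lemma mem_children : c ∈ T.children p ↔ c ≠ 0 ∧ T.parent c = p := by
  simp [children]

lemma parent_lt_self (hi : i ≠ 0) : T.parent i < i :=
  T.parent_lt i hi

lemma ancestors_zero : T.ancestors 0 = {0} := by
  rw [ancestors, dif_pos rfl]

lemma ancestors_of_ne_zero (hi : i ≠ 0) :
    T.ancestors i = insert (T.parent i) (T.ancestors (T.parent i)) := by
  rw [ancestors, dif_neg hi]

lemma le_of_mem_ancestors (ha : a ∈ T.ancestors i) : a ≤ i := by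
  induction i using ancestors.induct T with
  | case1 => exact (Finset.mem_singleton.1 (ancestors_zero ▸ ha)).le
  | case2 i hi ih =>
    rw [ancestors_of_ne_zero hi, Finset.mem_insert] at ha
    obtain rfl | ha := ha
    · exact (parent_lt_self hi).le
    · exact (ih ha).trans (parent_lt_self hi).le

lemma self_notMem_ancestors (hi : i ≠ 0) : i ∉ T.ancestors i := by
  rw [ancestors_of_ne_zero hi, Finset.mem_insert, not_or]
  exact ⟨(parent_lt_self hi).ne', fun h => (parent_lt_self hi).not_ge (le_of_mem_ancestors h)⟩

lemma R_pos (i : Fin (T.n + 1)) : 0 < T.R i :=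
  Finset.prod_pos fun a _ => T.W_pos a

lemma R_eq_W_mul_R_parent (hi : i ≠ 0) : T.R i = T.W i * T.R (T.parent i) := by
  rw [R, Finset.prod_insert (self_notMem_ancestors hi), ancestors_of_ne_zero hi, R]

lemma sum_R_children (hp : (T.children p).Nonempty) : ∑ c ∈ T.children p, T.R c = T.R p :=
  calc ∑ c ∈ T.children p, T.R c
      = ∑ c ∈ T.children p, T.W c * T.R p := Finset.sum_congr rfl fun c hc => by
        obtain ⟨hc0, rfl⟩ := mem_children.1 hc
        exact R_eq_W_mul_R_parent hc0
    _ = (∑ c ∈ T.children p, T.W c) * T.R p := (Finset.sum_mul ..).symm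
    _ = T.R p := by rw [show ∑ c ∈ T.children p, T.W c = 1 from T.W_sum p hp, one_mul]

end Tree

section Allocation

variable {h : ℕ} {V : Fin (T.n + 1) → ℕ} {p : Fin (T.n + 1)}

lemma isAlloc_zero : T.IsAlloc 0 0 := by
  simp [IsAlloc]

lemma IsAlloc.div_R_le (hV : T.IsAlloc h V) (hp : (T.children p).Nonempty) {q : ℝ}
    (hq : ∀ c ∈ T.children p, (V c : ℝ) / T.R c ≤ q) : (V p : ℝ) / T.R p ≤ q := by
  rw [div_le_iff₀ (R_pos p)]
  calc (V p : ℝ) = ∑ c ∈ T.children p, (V c : ℝ) := by rw [hV.2 p hp, Nat.cast_sum]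
    _ ≤ ∑ c ∈ T.children p, q * T.R c :=
      Finset.sum_le_sum fun c hc => (div_le_iff₀ (R_pos c)).1 (hq c hc)
    _ = q * T.R p := by rw [← Finset.mul_sum, sum_R_children hp]

end Allocation

section Step

variable {crit : (Fin (T.n + 1) → ℕ) → Fin (T.n + 1) → ℝ}
  {elig : (Fin (T.n + 1) → ℕ) → Fin (T.n + 1) → Prop}
  {P : Finset (Fin (T.n + 1))} {V V' : Fin (T.n + 1) → ℕ} {c d p : Fin (T.n + 1)} {h : ℕ}

namespace IsStepWith

lemma root_mem (hP : T.IsStepWith crit elig P V V') : 0 ∈ P :=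
  hP.1

lemma parent_mem (hP : T.IsStepWith crit elig P V V') (hc : c ∈ P) (hc0 : c ≠ 0) :
    T.parent c ∈ P :=
  hP.2.1 c hc hc0

lemma existsUnique_child_mem (hP : T.IsStepWith crit elig P V V') (hp : p ∈ P)
    (hne : (T.children p).Nonempty) : ∃! c, c ∈ T.children p ∧ c ∈ P := by
  obtain ⟨-, -, hchild, hunique, -, -⟩ := hP
  obtain ⟨c, hc, hcP⟩ := hchild p hp hne
  refine ⟨c, ⟨hc, hcP⟩, fun d ⟨hd, hdP⟩ => ?_⟩
  obtain ⟨hc0, hcp⟩ := mem_children.1 hc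
  obtain ⟨hd0, hdp⟩ := mem_children.1 hd
  exact hunique d hdP c hcP hd0 hc0 (hdp.trans hcp.symm)

lemma crit_le (hP : T.IsStepWith crit elig P V V') (hd : d ∈ T.children p) (hdP : d ∈ P)
    (hc : c ∈ T.children p) (helig : elig V c) : crit V d ≤ crit V c := by
  obtain ⟨-, -, -, -, hmin, -⟩ := hP
  obtain ⟨hd0, rfl⟩ := mem_children.1 hd
  exact (hmin d hdP hd0).2 c hc helig

lemma apply_eq (hP : T.IsStepWith crit elig P V V') (c : Fin (T.n + 1)) :
    V' c = V c + if c ∈ P then 1 else 0 :=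
  hP.2.2.2.2.2 c

lemma apply_of_mem (hP : T.IsStepWith crit elig P V V') (hc : c ∈ P) : V' c = V c + 1 := by
  rw [hP.apply_eq, if_pos hc]

lemma apply_of_notMem (hP : T.IsStepWith crit elig P V V') (hc : c ∉ P) : V' c = V c := by
  rw [hP.apply_eq, if_neg hc, add_zero]

lemma le (hP : T.IsStepWith crit elig P V V') : V ≤ V' := fun c => by
  rw [hP.apply_eq]
  exact Nat.le_add_right _ _

lemma sum_children_ite_mem (hP : T.IsStepWith crit elig P V V')
    (hp : (T.children p).Nonempty) :
    (∑ c ∈ T.children p, if c ∈ P then 1 else 0) = if p ∈ P then 1 else 0 := by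
  split_ifs with hpP
  · obtain ⟨c, ⟨hc, hcP⟩, hunique⟩ := hP.existsUnique_child_mem hpP hp
    rw [Finset.sum_eq_single_of_mem c hc fun d hd hdc =>
      if_neg fun hdP => hdc (hunique d ⟨hd, hdP⟩), if_pos hcP]
  · refine Finset.sum_eq_zero fun c hc => if_neg fun hcP => hpP ?_
    obtain ⟨hc0, rfl⟩ := mem_children.1 hc
    exact hP.parent_mem hcP hc0

lemma isAlloc_succ (hP : T.IsStepWith crit elig P V V') (hV : T.IsAlloc h V) :
    T.IsAlloc (h + 1) V' := by
  refine ⟨by rw [hP.apply_of_mem hP.root_mem, hV.1], fun p hp => ?_⟩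
  simp only [hP.apply_eq, Finset.sum_add_distrib]
  rw [hP.sum_children_ite_mem hp, hV.2 p hp]

end IsStepWith

lemma IsRun.isAlloc {V : ℕ → Fin (T.n + 1) → ℕ} (hrun : T.IsRun crit elig V) (h : ℕ) :
    T.IsAlloc h (V h) := by
  induction h with
  | zero => exact (funext hrun.1 : V 0 = 0) ▸ isAlloc_zero
  | succ h ih =>
    obtain ⟨P, hP⟩ := hrun.2 h
    exact hP.isAlloc_succ ih

end Step

section Jefferson

/-- The min-max inequality of Jefferson's method among siblings: moving a seat from a node `d` to
a sibling `c` does not lower the greater of their ratios of seats to entitlement. The pair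
`c = d` is allowed and imposes nothing. -/
def JeffersonMinMax (T : MLA) (V : Fin (T.n + 1) → ℕ) : Prop :=
  ∀ p, ∀ c ∈ T.children p, ∀ d ∈ T.children p, (V d : ℝ) / T.R d ≤ T.jeffersonCrit V c

variable {elig : (Fin (T.n + 1) → ℕ) → Fin (T.n + 1) → Prop}
  {P : Finset (Fin (T.n + 1))} {V V' : Fin (T.n + 1) → ℕ} {c d p : Fin (T.n + 1)}

lemma jeffersonCrit_mono (hV : V ≤ V') (c : Fin (T.n + 1)) :
    T.jeffersonCrit V c ≤ T.jeffersonCrit V' c := by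
  have hc := hV c
  have hR := (R_pos c).le
  unfold jeffersonCrit
  gcongr

lemma jeffersonMinMax_zero : T.JeffersonMinMax 0 := fun _ c _ d _ => by
  simp [jeffersonCrit, (R_pos c).le]

namespace IsStepWith

lemma div_R_eq_jeffersonCrit {crit : (Fin (T.n + 1) → ℕ) → Fin (T.n + 1) → ℝ}
    (hP : T.IsStepWith crit elig P V V') (hc : c ∈ P) :
    (V' c : ℝ) / T.R c = T.jeffersonCrit V c := by
  rw [hP.apply_of_mem hc, Nat.cast_succ, jeffersonCrit]

lemma div_R_le_jeffersonCrit (hP : T.IsStepWith T.jeffersonCrit elig P V V')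
    (hV : T.JeffersonMinMax V) (hc : c ∈ T.children p) (helig : elig V c)
    (hd : d ∈ T.children p) : (V' d : ℝ) / T.R d ≤ T.jeffersonCrit V c := by
  by_cases hdP : d ∈ P
  · rw [hP.div_R_eq_jeffersonCrit hdP]
    exact hP.crit_le hd hdP hc helig
  · rw [hP.apply_of_notMem hdP]
    exact hV p c hc d hd

lemma jeffersonMinMax (hP : T.IsStepWith T.jeffersonCrit T.trivElig P V V')
    (hV : T.JeffersonMinMax V) : T.JeffersonMinMax V' := fun _ c hc _ hd =>
  (hP.div_R_le_jeffersonCrit hV hc trivial hd).trans (jeffersonCrit_mono hP.le c)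

end IsStepWith

lemma IsRun.jeffersonMinMax {V : ℕ → Fin (T.n + 1) → ℕ}
    (hrun : T.IsRun T.jeffersonCrit T.trivElig V) (h : ℕ) : T.JeffersonMinMax (V h) := by
  induction h with
  | zero => exact (funext hrun.1 : V 0 = 0) ▸ jeffersonMinMax_zero
  | succ h ih =>
    obtain ⟨P, hP⟩ := hrun.2 h
    exact hP.jeffersonMinMax ih

end Jefferson

end MLA

/-- In any run of the multi-level Jefferson's method, whenever
a non-root node `c` (with parent `p`) has just received the `g`-th seat (`g ≥ 1`,
`c` among the recipients `P` of that seat), the resulting allocation satisfies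
`V^g_c / R_c ≥ V^g_p / R_p`. -/
theorem jefferson_just_received_ratio (T : MLA) (V : ℕ → Fin (T.n + 1) → ℕ)
    (hrun : T.IsRun T.jeffersonCrit T.trivElig V) (g : ℕ) (hg : 1 ≤ g)
    (P : Finset (Fin (T.n + 1)))
    (hP : T.IsStepWith T.jeffersonCrit T.trivElig P (V (g - 1)) (V g))
    (c : Fin (T.n + 1)) (hc : c ∈ P) (hc0 : c ≠ 0) :
    (V g (T.parent c) : ℝ) / T.R (T.parent c) ≤ (V g c : ℝ) / T.R c := by
  have hcp : c ∈ T.children (T.parent c) := MLA.mem_children.2 ⟨hc0, rfl⟩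
  refine (hrun.isAlloc g).div_R_le ⟨c, hcp⟩ fun d hd => ?_
  rw [hP.div_R_eq_jeffersonCrit hc]
  exact hP.div_R_le_jeffersonCrit (hrun.jeffersonMinMax (g - 1)) hcp trivial hd
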